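/- arXiv:1711.06447 — 3 statements merged into one kernel-verified Lean document; each statement's English description precedes it below -/
import Mathlib

section
/- For any 0 < α < 1 and any nonzero x ∈ ℝ³ and t > 0, ∫₀^t ∫_{ℝ³} |y - x|^{-(2+α)} p_s(y) dy ds ≤ (2/(α(1-α))) |x|^{-α}, where p_s is the 3-dimensional heat kernel. -/
open MeasureTheory Real Filter Topology

noncomputable def heatKernel (d : ℕ) (t : ℝ) (y : EuclideanSpace ℝ (Fin d)) : ℝ :=
  (2 * Real.pi * t) ^ (-(d : ℝ) / 2) * Real.exp (-‖y‖ ^ 2 / (2 * t))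


/-- Gamma integral as a lower Lebesgue integral. -/
lemma tipb_gamma (a r : ℝ) (ha : 0 < a) (hr : 0 < r) :
    ∫⁻ u in Set.Ioi (0:ℝ), ENNReal.ofReal (u ^ (a - 1) * Real.exp (-(r * u)))
      = ENNReal.ofReal ((1 / r) ^ a * Real.Gamma a) := by
  have h := Real.integral_rpow_mul_exp_neg_mul_Ioi ha hr
  have hpos : 0 < (1 / r) ^ a * Real.Gamma a :=
    mul_pos (Real.rpow_pos_of_pos (by positivity) _) (Real.Gamma_pos_of_pos ha)
  have hi : Integrable (fun u : ℝ => u ^ (a - 1) * Real.exp (-(r * u)))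
      (volume.restrict (Set.Ioi 0)) := by
    by_contra hc
    rw [integral_undef hc] at h
    linarith
  rw [← h, ofReal_integral_eq_lintegral_ofReal hi]
  filter_upwards [ae_restrict_mem measurableSet_Ioi] with u hu
  have : (0:ℝ) < u := hu
  simp only [Pi.zero_apply]; positivity

/-- Gaussian convolution. -/
lemma tipb_gauss (x : EuclideanSpace ℝ (Fin 3)) (u s : ℝ) (hu : 0 < u) (hs : 0 < s) :
    ∫⁻ y, ENNReal.ofReal (Real.exp (-(‖y - x‖ ^ 2 * u)) * heatKernel 3 s y)
      = ENNReal.ofReal ((1 + 2 * u * s) ^ (-(3:ℝ) / 2)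
          * Real.exp (-(u * ‖x‖ ^ 2 * (1 + 2 * u * s)⁻¹))) := by
  set b : ℝ := u + 1 / (2 * s) with hb
  have hbp : 0 < b := by positivity
  have hbc : 0 < (b : ℂ).re := by simpa using hbp
  have h := GaussianFourier.integral_cexp_neg_mul_sq_norm_add hbc ((2 * u : ℝ) : ℂ) x
  have hi := GaussianFourier.integrable_cexp_neg_mul_sq_norm_add hbc ((2 * u : ℝ) : ℂ) x
  have e1 : ∀ y : EuclideanSpace ℝ (Fin 3),
      Complex.exp (-(b:ℂ) * (‖y‖:ℂ) ^ 2 + ((2 * u : ℝ) : ℂ) * ((inner ℝ x y : ℝ) : ℂ))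
        = ((Real.exp (-b * ‖y‖ ^ 2 + 2 * u * inner ℝ x y) : ℝ) : ℂ) := by
    intro y; push_cast; rfl
  have e2 : ((Real.pi : ℂ) / b) ^ ((Module.finrank ℝ (EuclideanSpace ℝ (Fin 3)) : ℂ) / 2) *
      Complex.exp (((2 * u : ℝ) : ℂ) ^ 2 * (‖x‖ : ℂ) ^ 2 / (4 * b))
      = (((Real.pi / b) ^ ((3:ℝ) / 2) * Real.exp ((2 * u) ^ 2 * ‖x‖ ^ 2 / (4 * b)) : ℝ) : ℂ) := by
    have hc : (((Real.pi / b) ^ ((3:ℝ) / 2) : ℝ) : ℂ) = ((Real.pi : ℂ) / b) ^ ((3:ℂ) / 2) := by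
      rw [Complex.ofReal_cpow (by positivity)]
      push_cast
      rfl
    rw [Complex.ofReal_mul ((Real.pi / b) ^ ((3:ℝ) / 2)), hc]
    simp
  simp only [e1] at h hi
  rw [e2] at h
  have h' : ∫ y : EuclideanSpace ℝ (Fin 3), Real.exp (-b * ‖y‖ ^ 2 + 2 * u * inner ℝ x y)
      = (Real.pi / b) ^ ((3:ℝ) / 2) * Real.exp ((2 * u) ^ 2 * ‖x‖ ^ 2 / (4 * b)) := by
    have h2 := (integral_ofReal (𝕜 := ℂ) (μ := volume) (f := fun y : EuclideanSpace ℝ (Fin 3) =>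
      Real.exp (-b * ‖y‖ ^ 2 + 2 * u * inner ℝ x y)))
    exact Complex.ofReal_injective (h2.symm.trans h)
  have hi' : Integrable (fun y : EuclideanSpace ℝ (Fin 3) =>
      Real.exp (-b * ‖y‖ ^ 2 + 2 * u * inner ℝ x y)) := by
    have h3 := hi.re
    simp only [RCLike.re_eq_complex_re, Complex.ofReal_re] at h3
    exact h3
  have e3 : ∀ y, Real.exp (-(‖y - x‖ ^ 2 * u)) * heatKernel 3 s y
      = ((2 * Real.pi * s) ^ (-(3:ℝ) / 2) * Real.exp (-(u * ‖x‖ ^ 2))) *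
        Real.exp (-b * ‖y‖ ^ 2 + 2 * u * inner ℝ x y) := by
    intro y
    unfold heatKernel
    rw [mul_left_comm, ← Real.exp_add, mul_assoc (_ ^ _) (Real.exp _) (Real.exp _),
      ← Real.exp_add]
    congr 2
    rw [norm_sub_sq_real, real_inner_comm, hb]
    field_simp
    ring
  simp only [e3]
  rw [← ofReal_integral_eq_lintegral_ofReal (hi'.const_mul _)
    (Eventually.of_forall fun y => by simp only [Pi.zero_apply]; positivity),
    integral_const_mul, h']
  congr 1
  have hb2 : Real.pi / b = (2 * Real.pi * s) * (1 + 2 * u * s)⁻¹ := by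
    rw [hb]; field_simp; ring
  have hq : 0 < 1 + 2 * u * s := by positivity
  rw [hb2, Real.mul_rpow (x := 2 * Real.pi * s) (by positivity) (by positivity),
    Real.inv_rpow hq.le,
    neg_div, Real.rpow_neg (by positivity), Real.rpow_neg hq.le]
  have hP : (2 * Real.pi * s) ^ ((3:ℝ)/2) ≠ 0 := by positivity
  have : Real.exp (-(u * ‖x‖ ^ 2 * (1 + 2 * u * s)⁻¹))
      = Real.exp (-(u * ‖x‖ ^ 2)) * Real.exp ((2 * u) ^ 2 * ‖x‖ ^ 2 / (4 * b)) := by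
    rw [← Real.exp_add]
    congr 1
    have : b = (1 + 2 * u * s) / (2 * s) := by rw [hb]; field_simp; ring
    rw [this]
    field_simp
    ring
  rw [this]
  field_simp

/-- Substitution in the time integral. -/
lemma tipb_subst (R u : ℝ) (hu : 0 < u) :
    ∫⁻ s in Set.Ioi (0:ℝ), ENNReal.ofReal ((1 + 2 * u * s) ^ (-(3:ℝ) / 2)
          * Real.exp (-(u * R * (1 + 2 * u * s)⁻¹)))
      ≤ ∫⁻ v in Set.Ioo (0:ℝ) 1, ENNReal.ofReal (v ^ (-(1:ℝ)/2) / (2 * u) *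
          Real.exp (-(u * R * v))) := by
  have hd : ∀ s ∈ Set.Ioi (0:ℝ), HasDerivWithinAt (fun s : ℝ => (1 + 2 * u * s)⁻¹)
      (-(2 * u) / (1 + 2 * u * s) ^ 2) (Set.Ioi 0) s := by
    intro s hs
    have hs' : (0:ℝ) < s := hs
    have h1 : HasDerivAt (fun s : ℝ => 1 + 2 * u * s) (2 * u) s := by
      simpa using ((hasDerivAt_id s).const_mul (2 * u)).const_add 1
    exact (h1.fun_inv (by positivity)).hasDerivWithinAt
  have hinj : Set.InjOn (fun s : ℝ => (1 + 2 * u * s)⁻¹) (Set.Ioi 0) := by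
    intro a _ b _ hab
    have := inv_injective hab
    have h2 : 2 * u * a = 2 * u * b := by linarith
    exact mul_left_cancel₀ (by positivity) h2
  have key := lintegral_image_eq_lintegral_abs_deriv_mul measurableSet_Ioi hd hinj
    (fun v => ENNReal.ofReal (v ^ (-(1:ℝ)/2) / (2 * u) * Real.exp (-(u * R * v))))
  have hsub : (fun s : ℝ => (1 + 2 * u * s)⁻¹) '' Set.Ioi 0 ⊆ Set.Ioo 0 1 := by
    rintro _ ⟨s, hs, rfl⟩
    have hs' : (0:ℝ) < s := hs
    have : 0 < 2 * u * s := by positivity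
    exact ⟨by positivity, inv_lt_one_of_one_lt₀ (by linarith)⟩
  refine le_trans (le_of_eq ?_) (lintegral_mono_set hsub)
  rw [key]
  refine setLIntegral_congr_fun measurableSet_Ioi ?_
  intro s hs
  have hs' : (0:ℝ) < s := hs
  have hq : 0 < 1 + 2 * u * s := by positivity
  simp only
  rw [← ENNReal.ofReal_mul (abs_nonneg _), ← mul_assoc]
  congr 2
  rw [neg_div (_ ^ 2), abs_neg, abs_of_pos (by positivity), Real.inv_rpow hq.le,
    neg_div, neg_div, Real.rpow_neg hq.le, Real.rpow_neg hq.le, inv_inv]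
  have : (1 + 2 * u * s) ^ 2 = (1 + 2 * u * s) ^ ((3:ℝ)/2) * (1 + 2 * u * s) ^ ((1:ℝ)/2) := by
    rw [← Real.rpow_add hq, ← Real.rpow_natCast]; norm_num
  rw [this]
  field_simp

lemma tipb_rpow (α : ℝ) (hα1 : α < 1) :
    ∫⁻ v in Set.Ioo (0:ℝ) 1, ENNReal.ofReal (v ^ (-(1 + α) / 2))
      = ENNReal.ofReal (2 / (1 - α)) := by
  have hi : IntervalIntegrable (fun v : ℝ => v ^ (-(1 + α) / 2)) volume 0 1 :=
    intervalIntegral.intervalIntegrable_rpow' (by linarith)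
  rw [setLIntegral_congr (Ioo_ae_eq_Ioc),
    ← ofReal_integral_eq_lintegral_ofReal
      ((intervalIntegrable_iff_integrableOn_Ioc_of_le zero_le_one).1 hi),
    ← intervalIntegral.integral_of_le zero_le_one, integral_rpow (Or.inl (by linarith))]
  · congr 1
    rw [Real.one_rpow, Real.zero_rpow (by linarith)]
    have : 1 - α ≠ 0 := by linarith
    have e : -(1+α)/2 + 1 = (1 - α) / 2 := by ring
    rw [e]
    field_simp
    ring
  · filter_upwards [ae_restrict_mem measurableSet_Ioc] with u hu
    exact Real.rpow_nonneg hu.1.le _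

theorem time_integral_power_bound (α : ℝ) (hα0 : 0 < α) (hα1 : α < 1)
    (x : EuclideanSpace ℝ (Fin 3)) (hx : x ≠ 0) (t : ℝ) (ht : 0 < t) :
    (∫ s in Set.Ioc (0 : ℝ) t, ∫ y, ‖y - x‖ ^ (-(2 + α)) * heatKernel 3 s y) ≤
      2 / (α * (1 - α)) * ‖x‖ ^ (-α) := by
  have hR : 0 < ‖x‖ := norm_pos_iff.2 hx
  have h1α : 0 < 1 - α := by linarith
  set G : ℝ := Real.Gamma (1 + α / 2) with hG
  have hGp : 0 < G := Real.Gamma_pos_of_pos (by positivity)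
  have hG2 : Real.Gamma (α / 2) = G * (2 / α) := by
    rw [hG, add_comm, Real.Gamma_add_one (by positivity)]
    field_simp
  have hRHS : 0 ≤ 2 / (α * (1 - α)) * ‖x‖ ^ (-α) := by positivity
  -- measurability of the joint integrand
  have hkm : Measurable (fun p : ℝ × EuclideanSpace ℝ (Fin 3) => heatKernel 3 p.1 p.2) := by
    unfold heatKernel
    fun_prop
  have hk0 : ∀ s : ℝ, 0 < s → ∀ y, 0 ≤ heatKernel 3 s y := by
    intro s hs y
    unfold heatKernel
    positivity
  -- Gamma representation
  have step1 : ∀ s : ℝ, 0 < s → ∀ y : EuclideanSpace ℝ (Fin 3),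
      ENNReal.ofReal G * ‖‖y - x‖ ^ (-(2 + α)) * heatKernel 3 s y‖ₑ
        ≤ ∫⁻ u in Set.Ioi (0:ℝ), ENNReal.ofReal (u ^ (α / 2)) *
          ENNReal.ofReal (Real.exp (-(‖y - x‖ ^ 2 * u)) * heatKernel 3 s y) := by
    intro s hs y
    rcases eq_or_ne y x with rfl | hyx
    · rw [sub_self, norm_zero, Real.zero_rpow (by linarith)]
      simp
    have hr : 0 < ‖y - x‖ := norm_pos_iff.2 (sub_ne_zero.2 hyx)
    have hg := tipb_gamma (1 + α / 2) (‖y - x‖ ^ 2) (by positivity) (by positivity)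
    have e : (1 / ‖y - x‖ ^ 2) ^ (1 + α / 2) = ‖y - x‖ ^ (-(2 + α)) := by
      rw [one_div, ← Real.rpow_natCast, ← Real.rpow_neg hr.le, ← Real.rpow_mul hr.le]
      congr 1
      push_cast
      ring
    rw [e] at hg
    have e2 : ∀ u ∈ Set.Ioi (0:ℝ), ENNReal.ofReal (u ^ (α / 2)) *
          ENNReal.ofReal (Real.exp (-(‖y - x‖ ^ 2 * u)) * heatKernel 3 s y)
        = ENNReal.ofReal (u ^ (1 + α / 2 - 1) * Real.exp (-(‖y - x‖ ^ 2 * u))) *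
          ENNReal.ofReal (heatKernel 3 s y) := by
      intro u hu
      have hu' : (0:ℝ) < u := hu
      rw [← ENNReal.ofReal_mul (by positivity), ← ENNReal.ofReal_mul (by positivity),
        add_sub_cancel_left, mul_assoc]
    rw [setLIntegral_congr_fun measurableSet_Ioi e2, lintegral_mul_const _ (by fun_prop), hg,
      Real.enorm_of_nonneg (mul_nonneg (by positivity) (hk0 s hs y)),
      ← ENNReal.ofReal_mul hGp.le,
      ← ENNReal.ofReal_mul (mul_nonneg (by positivity) hGp.le)]
    apply le_of_eq
    congr 1
    ring
  -- after integrating in y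
  have step2 : ∀ s : ℝ, 0 < s →
      ENNReal.ofReal G * ‖∫ y, ‖y - x‖ ^ (-(2 + α)) * heatKernel 3 s y‖ₑ
        ≤ ∫⁻ u in Set.Ioi (0:ℝ), ENNReal.ofReal (u ^ (α / 2)) *
          ENNReal.ofReal ((1 + 2 * u * s) ^ (-(3:ℝ) / 2)
          * Real.exp (-(u * ‖x‖ ^ 2 * (1 + 2 * u * s)⁻¹))) := by
    intro s hs
    have hks : Measurable (fun y => heatKernel 3 s y) := by
      unfold heatKernel
      fun_prop
    calc ENNReal.ofReal G * ‖∫ y, ‖y - x‖ ^ (-(2 + α)) * heatKernel 3 s y‖ₑ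
        ≤ ENNReal.ofReal G * ∫⁻ y, ‖‖y - x‖ ^ (-(2 + α)) * heatKernel 3 s y‖ₑ := by
          gcongr
          exact enorm_integral_le_lintegral_enorm _
      _ = ∫⁻ y, ENNReal.ofReal G * ‖‖y - x‖ ^ (-(2 + α)) * heatKernel 3 s y‖ₑ := by
          rw [lintegral_const_mul' _ _ ENNReal.ofReal_ne_top]
      _ ≤ ∫⁻ y, ∫⁻ u in Set.Ioi (0:ℝ), ENNReal.ofReal (u ^ (α / 2)) *
          ENNReal.ofReal (Real.exp (-(‖y - x‖ ^ 2 * u)) * heatKernel 3 s y) :=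
          lintegral_mono (step1 s hs)
      _ = ∫⁻ u in Set.Ioi (0:ℝ), ∫⁻ y, ENNReal.ofReal (u ^ (α / 2)) *
          ENNReal.ofReal (Real.exp (-(‖y - x‖ ^ 2 * u)) * heatKernel 3 s y) := by
          rw [lintegral_lintegral_swap]
          apply Measurable.aemeasurable
          have : Measurable (fun p : EuclideanSpace ℝ (Fin 3) × ℝ => heatKernel 3 s p.1) :=
            hks.comp measurable_fst
          simp only [Function.uncurry_def]
          fun_prop
      _ = _ := by
          refine setLIntegral_congr_fun measurableSet_Ioi ?_
          intro u hu
          simp only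
          rw [lintegral_const_mul' _ _ ENNReal.ofReal_ne_top, tipb_gauss x u s hu hs]
  -- total
  have step3 : ENNReal.ofReal G *
      ∫⁻ s in Set.Ioc (0 : ℝ) t, ‖∫ y, ‖y - x‖ ^ (-(2 + α)) * heatKernel 3 s y‖ₑ
      ≤ ENNReal.ofReal (G * (2 / (α * (1 - α)) * ‖x‖ ^ (-α))) := by
    calc ENNReal.ofReal G *
        ∫⁻ s in Set.Ioc (0 : ℝ) t, ‖∫ y, ‖y - x‖ ^ (-(2 + α)) * heatKernel 3 s y‖ₑ
        = ∫⁻ s in Set.Ioc (0 : ℝ) t, ENNReal.ofReal G *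
            ‖∫ y, ‖y - x‖ ^ (-(2 + α)) * heatKernel 3 s y‖ₑ := by
          rw [lintegral_const_mul' _ _ ENNReal.ofReal_ne_top]
      _ ≤ ∫⁻ s in Set.Ioi (0 : ℝ), ENNReal.ofReal G *
            ‖∫ y, ‖y - x‖ ^ (-(2 + α)) * heatKernel 3 s y‖ₑ :=
          lintegral_mono_set Set.Ioc_subset_Ioi_self
      _ ≤ ∫⁻ s in Set.Ioi (0 : ℝ), ∫⁻ u in Set.Ioi (0:ℝ), ENNReal.ofReal (u ^ (α / 2)) *
          ENNReal.ofReal ((1 + 2 * u * s) ^ (-(3:ℝ) / 2)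
          * Real.exp (-(u * ‖x‖ ^ 2 * (1 + 2 * u * s)⁻¹))) :=
          setLIntegral_mono' measurableSet_Ioi step2
      _ = ∫⁻ u in Set.Ioi (0 : ℝ), ∫⁻ s in Set.Ioi (0:ℝ), ENNReal.ofReal (u ^ (α / 2)) *
          ENNReal.ofReal ((1 + 2 * u * s) ^ (-(3:ℝ) / 2)
          * Real.exp (-(u * ‖x‖ ^ 2 * (1 + 2 * u * s)⁻¹))) := by
          rw [lintegral_lintegral_swap]
          apply Measurable.aemeasurable
          simp only [Function.uncurry_def]
          fun_prop
      _ ≤ ∫⁻ u in Set.Ioi (0 : ℝ), ∫⁻ v in Set.Ioo (0:ℝ) 1, ENNReal.ofReal (u ^ (α / 2)) *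
          ENNReal.ofReal (v ^ (-(1:ℝ)/2) / (2 * u) * Real.exp (-(u * ‖x‖ ^ 2 * v))) := by
          refine setLIntegral_mono' measurableSet_Ioi ?_
          intro u hu
          rw [lintegral_const_mul' _ _ ENNReal.ofReal_ne_top,
            lintegral_const_mul' _ _ ENNReal.ofReal_ne_top]
          exact mul_le_mul_right (tipb_subst _ u hu) _
      _ = ∫⁻ v in Set.Ioo (0 : ℝ) 1, ∫⁻ u in Set.Ioi (0:ℝ), ENNReal.ofReal (u ^ (α / 2)) *
          ENNReal.ofReal (v ^ (-(1:ℝ)/2) / (2 * u) * Real.exp (-(u * ‖x‖ ^ 2 * v))) := by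
          rw [lintegral_lintegral_swap]
          apply Measurable.aemeasurable
          simp only [Function.uncurry_def]
          fun_prop
      _ = ∫⁻ v in Set.Ioo (0 : ℝ) 1, ENNReal.ofReal (‖x‖ ^ (-α) * (G / α)) *
            ENNReal.ofReal (v ^ (-(1 + α) / 2)) := by
          refine setLIntegral_congr_fun measurableSet_Ioo ?_
          intro v hv
          have hv0 : 0 < v := hv.1
          simp only
          have e : ∀ u ∈ Set.Ioi (0:ℝ), ENNReal.ofReal (u ^ (α / 2)) *
              ENNReal.ofReal (v ^ (-(1:ℝ)/2) / (2 * u) * Real.exp (-(u * ‖x‖ ^ 2 * v)))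
              = ENNReal.ofReal (v ^ (-(1:ℝ)/2) / 2) *
                ENNReal.ofReal (u ^ (α / 2 - 1) * Real.exp (-((‖x‖ ^ 2 * v) * u))) := by
            intro u hu
            have hu' : (0:ℝ) < u := hu
            rw [← ENNReal.ofReal_mul (by positivity), ← ENNReal.ofReal_mul (by positivity),
              Real.rpow_sub_one hu'.ne']
            congr 1
            rw [show u * ‖x‖ ^ 2 * v = ‖x‖ ^ 2 * v * u by ring]
            field_simp
          rw [setLIntegral_congr_fun measurableSet_Ioi e,
            lintegral_const_mul' _ _ ENNReal.ofReal_ne_top,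
            tipb_gamma (α / 2) (‖x‖ ^ 2 * v) (by positivity) (by positivity), hG2,
            ← ENNReal.ofReal_mul (by positivity), ← ENNReal.ofReal_mul (by positivity)]
          congr 1
          have e1 : (1 / (‖x‖ ^ 2 * v)) ^ (α / 2) = ‖x‖ ^ (-α) * v ^ (-(α / 2)) := by
            rw [one_div, Real.inv_rpow (by positivity), ← Real.rpow_neg (by positivity),
              Real.mul_rpow (by positivity) hv0.le, ← Real.rpow_natCast, ← Real.rpow_mul hR.le]
            congr 2
            push_cast
            ring
          have e2 : v ^ (-(1 + α) / 2) = v ^ (-(1:ℝ)/2) * v ^ (-(α / 2)) := by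
            rw [← Real.rpow_add hv0]
            congr 1
            ring
          rw [e1, e2]
          field_simp
      _ = _ := by
          rw [lintegral_const_mul' _ _ ENNReal.ofReal_ne_top, tipb_rpow α hα1,
            ← ENNReal.ofReal_mul (by positivity)]
          congr 1
          field_simp
  rw [ENNReal.ofReal_mul hGp.le] at step3
  have step4 := (ENNReal.mul_le_mul_iff_right (ENNReal.ofReal_pos.2 hGp).ne'
    ENNReal.ofReal_ne_top).1 step3
  have step5 := (enorm_integral_le_lintegral_enorm
    (μ := volume.restrict (Set.Ioc (0:ℝ) t))
    (fun s => ∫ y, ‖y - x‖ ^ (-(2 + α)) * heatKernel 3 s y)).trans step4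
  rw [← ofReal_norm, ENNReal.ofReal_le_ofReal_iff hRHS] at step5
  exact (Real.le_norm_self _).trans step5
end

section
/- In ℝ³, for any ε > 0 and any points y ≠ x, the Laplacian of the heat-semigroup mollification of the log potential satisfies Δ_y ∫ p_ε(y - z) log|z - x| dz = ∫ p_ε(y - z) |z - x|^{-2} dz; i.e., the Laplacian commutes with the Gaussian convolution of g_x(z) = log|z - x|. -/
open MeasureTheory Real Filter Topology

noncomputable def laplacian (f : EuclideanSpace ℝ (Fin 3) → ℝ)
    (y : EuclideanSpace ℝ (Fin 3)) : ℝ :=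
  ∑ i : Fin 3, iteratedFDeriv ℝ 2 f y (fun _ => EuclideanSpace.single i (1 : ℝ))

abbrev E3 := EuclideanSpace ℝ (Fin 3)

/-- The dominating weight. -/
noncomputable def wt (x z : E3) : ℝ := ‖z - x‖ + (‖z - x‖ ^ 2)⁻¹

lemma wt_nonneg (x z : E3) : 0 ≤ wt x z := by unfold wt; positivity

lemma measurable_wt (x : E3) : Measurable (wt x) := by unfold wt; fun_prop

lemma integrable_gauss_wt0 (b : ℝ) (hb : 0 < b) :
    Integrable (fun z : E3 => Real.exp (-b * ‖z‖ ^ 2) * (‖z‖ + (‖z‖ ^ 2)⁻¹)) := by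
  have := (integrable_fun_norm_addHaar (E := E3) (volume : Measure E3)
    (f := fun r : ℝ => Real.exp (-b * r ^ 2) * (r + (r ^ 2)⁻¹))).2
  apply this
  have h1 := integrableOn_rpow_mul_exp_neg_mul_sq hb (s := 3) (by norm_num)
  have h2 := integrableOn_rpow_mul_exp_neg_mul_sq hb (s := 0) (by norm_num)
  refine (h1.add h2).congr_fun ?_ measurableSet_Ioi
  intro r hr
  have hr : 0 < r := hr
  have h3 : r ^ (3 : ℝ) = r ^ 3 := by exact_mod_cast Real.rpow_natCast r 3
  simp
  field_simp

lemma exp_shift (b : ℝ) (hb : 0 < b) (u v : E3) :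
    Real.exp (-b * ‖u‖ ^ 2) ≤ Real.exp (b * ‖u - v‖ ^ 2) * Real.exp (-(b / 2) * ‖v‖ ^ 2) := by
  rw [← Real.exp_add, Real.exp_le_exp]
  have h : ‖v‖ ≤ ‖u‖ + ‖u - v‖ := by
    have := norm_sub_le u (u - v)
    simpa using this
  have h2 : ‖v‖ ^ 2 ≤ 2 * (‖u‖ ^ 2 + ‖u - v‖ ^ 2) := by
    nlinarith [norm_nonneg v, norm_nonneg u, norm_nonneg (u - v), sq_nonneg (‖u‖ - ‖u - v‖)]
  nlinarith

lemma integrable_gauss_wt (b : ℝ) (hb : 0 < b) (x w : E3) :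
    Integrable (fun z : E3 => Real.exp (-b * ‖w - z‖ ^ 2) * wt x z) := by
  have h := ((integrable_gauss_wt0 (b / 2) (by positivity)).comp_sub_right x).const_mul
    (Real.exp (b * ‖w - x‖ ^ 2))
  refine h.mono' ?_ (Filter.Eventually.of_forall fun z => ?_)
  · have := measurable_wt x
    exact Measurable.aestronglyMeasurable (by fun_prop)
  · rw [Real.norm_of_nonneg (mul_nonneg (Real.exp_nonneg _) (wt_nonneg _ _)), ← mul_assoc]
    apply mul_le_mul_of_nonneg_right _ (wt_nonneg x z)
    have := exp_shift b hb (w - z) (x - z)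
    rw [norm_sub_rev x z] at this
    simpa using this

/-- admissible densities -/
def Adm (x : E3) (g : E3 → ℝ) : Prop :=
  Measurable g ∧ ∃ C, ∀ z, z ≠ x → |g z| ≤ C * wt x z

/-- Gaussian decay -/
def GD {G : Type*} [NormedAddCommGroup G] (K : E3 → G) : Prop :=
  Continuous K ∧ ∃ a > 0, ∃ D, ∀ u, ‖K u‖ ≤ D * Real.exp (-a * ‖u‖ ^ 2)

lemma ae_ne (x : E3) : ∀ᵐ z : E3, z ≠ x := by
  simp [ae_iff]

section
variable {G : Type*} [NormedAddCommGroup G] [NormedSpace ℝ G]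

lemma Adm.integrable {x : E3} {g : E3 → ℝ} (hg : Adm x g) {K : E3 → G} (hK : GD K) (w : E3) :
    Integrable (fun z => g z • K (w - z)) := by
  obtain ⟨hm, C, hC⟩ := hg
  obtain ⟨hc, a, ha, D, hD⟩ := hK
  refine ((integrable_gauss_wt a ha x w).const_mul (C * D)).mono' ?_ ?_
  · exact hm.aestronglyMeasurable.smul (hc.comp (by fun_prop)).aestronglyMeasurable
  · filter_upwards [ae_ne x] with z hz
    rw [norm_smul, Real.norm_eq_abs]
    calc _ ≤ (C * wt x z) * (D * Real.exp (-a * ‖w - z‖ ^ 2)) :=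
          mul_le_mul (hC z hz) (hD _) (norm_nonneg _) ((abs_nonneg _).trans (hC z hz))
      _ = _ := by ring

lemma hasFDerivAt_conv {x : E3} {g : E3 → ℝ} (hg : Adm x g) {K : E3 → G} (hK : GD K)
    {K' : E3 → E3 →L[ℝ] G} (hK' : GD K') (hd : ∀ u, HasFDerivAt K (K' u) u) (w : E3) :
    HasFDerivAt (fun w => ∫ z, g z • K (w - z)) (∫ z, g z • K' (w - z)) w := by
  have hm := hg.1
  obtain ⟨C, hC⟩ := hg.2
  have hc := hK'.1
  obtain ⟨a, ha, D, hD⟩ := hK'.2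
  refine hasFDerivAt_integral_of_dominated_of_fderiv_le
    (F := fun w z => g z • K (w - z)) (F' := fun w z => g z • K' (w - z))
    (bound := fun z => C * D * Real.exp a * (Real.exp (-(a / 2) * ‖w - z‖ ^ 2) * wt x z))
    (Metric.ball_mem_nhds w one_pos) (Filter.Eventually.of_forall fun w => ?_)
    (hg.integrable hK w) (hg.integrable hK' w).aestronglyMeasurable ?_ ?_ ?_
  · exact (hg.integrable hK w).aestronglyMeasurable
  · filter_upwards [ae_ne x] with z hz v hv
    have h1 := exp_shift a ha (v - z) (w - z)
    have hvw : ‖v - w‖ ≤ 1 := by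
      have := Metric.mem_ball.1 hv
      rw [dist_eq_norm] at this; exact this.le
    have h2 : Real.exp (a * ‖v - z - (w - z)‖ ^ 2) ≤ Real.exp a := by
      rw [Real.exp_le_exp]
      simp only [sub_sub_sub_cancel_right]
      have : ‖v - w‖ ^ 2 ≤ 1 := pow_le_one₀ (norm_nonneg _) hvw
      nlinarith
    have hD0 : 0 ≤ D := by
      have := (norm_nonneg _).trans (hD 0)
      simpa using this
    rw [norm_smul, Real.norm_eq_abs]
    calc _ ≤ (C * wt x z) * (D * (Real.exp a * Real.exp (-(a / 2) * ‖w - z‖ ^ 2))) := by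
          refine mul_le_mul (hC z hz) ((hD _).trans ?_) (norm_nonneg _)
            ((abs_nonneg _).trans (hC z hz))
          gcongr
          exact h1.trans (by gcongr)
      _ = _ := by ring
  · exact (integrable_gauss_wt (a / 2) (by positivity) x w).const_mul _
  · refine Filter.Eventually.of_forall fun z v _ => ?_
    have := (hd (v - z)).comp v ((hasFDerivAt_id v).sub_const z)
    exact (this.congr_fderiv (by ext; simp)).const_smul (g z)
end

/-- Gaussian and derivatives -/
noncomputable def Kg (c b : ℝ) (u : E3) : ℝ := c * Real.exp (-b * ‖u‖ ^ 2)

noncomputable def Bl : E3 →L[ℝ] E3 →L[ℝ] ℝ := innerSL ℝ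

lemma Bl_apply (u v : E3) : Bl u v = inner ℝ u v := rfl

noncomputable def Kg1 (c b : ℝ) (u : E3) : E3 →L[ℝ] ℝ := (-2 * b * Kg c b u) • Bl u

noncomputable def Kg2 (c b : ℝ) (u : E3) : E3 →L[ℝ] E3 →L[ℝ] ℝ :=
  (-2 * b * Kg c b u) • Bl + ((-2 * b) • Kg1 c b u).smulRight (Bl u)

lemma hasFDerivAt_Kg (c b : ℝ) (u : E3) : HasFDerivAt (Kg c b) (Kg1 c b u) u := by
  have h := (((hasFDerivAt_id u).norm_sq.const_mul (-b)).exp).const_mul c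
  refine h.congr_fderiv ?_
  ext v
  simp [Kg1, Kg, Bl_apply]
  ring

lemma hasFDerivAt_Kg1 (c b : ℝ) (u : E3) : HasFDerivAt (Kg1 c b) (Kg2 c b u) u := by
  have h := ((hasFDerivAt_Kg c b u).const_mul (-2 * b)).smul (Bl.hasFDerivAt (x := u))
  exact h

lemma continuous_Kg (c b : ℝ) : Continuous (Kg c b) := by unfold Kg; fun_prop
lemma continuous_Kg1 (c b : ℝ) : Continuous (Kg1 c b) := by
  have := continuous_Kg c b
  unfold Kg1; fun_prop
set_option maxSynthPendingDepth 3 in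
lemma continuous_Kg2 (c b : ℝ) : Continuous (Kg2 c b) := by
  have := continuous_Kg c b
  have := continuous_Kg1 c b
  unfold Kg2
  have h : Continuous fun u => ContinuousLinearMap.smulRightL ℝ E3 (E3 →L[ℝ] ℝ) ((-2 * b) • Kg1 c b u) (Bl u) := by
    fun_prop
  exact (by fun_prop : Continuous fun u => (-2 * b * Kg c b u) • Bl).add h

lemma norm_Bl_le (u : E3) : ‖Bl u‖ = ‖u‖ := innerSL_apply_norm ℝ u
lemma norm_Bl_le_one : ‖Bl‖ ≤ 1 := by
  refine ContinuousLinearMap.opNorm_le_bound _ zero_le_one fun u => ?_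
  rw [norm_Bl_le, one_mul]

lemma GD_of_poly {G : Type*} [NormedAddCommGroup G] {K : E3 → G} (hc : Continuous K) {b D : ℝ}
    (hb : 0 < b) (h : ∀ u, ‖K u‖ ≤ D * (1 + ‖u‖ ^ 2) * Real.exp (-b * ‖u‖ ^ 2)) : GD K := by
  refine ⟨hc, b / 2, by positivity, D * (1 + 2 / b), fun u => (h u).trans ?_⟩
  have hD0 : 0 ≤ D := by
    have := (norm_nonneg _).trans (h 0)
    simpa using this
  rw [mul_assoc, mul_assoc]
  refine mul_le_mul_of_nonneg_left ?_ hD0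
  have e : Real.exp (-b * ‖u‖ ^ 2) =
      Real.exp (-(b / 2 * ‖u‖ ^ 2)) * Real.exp (-(b / 2) * ‖u‖ ^ 2) := by
    rw [← Real.exp_add]; congr 1; ring
  rw [e, ← mul_assoc]
  refine mul_le_mul_of_nonneg_right ?_ (Real.exp_nonneg _)
  rw [Real.exp_neg, ← div_eq_mul_inv, div_le_iff₀ (Real.exp_pos _)]
  have h1 := Real.add_one_le_exp (b / 2 * ‖u‖ ^ 2)
  calc 1 + ‖u‖ ^ 2 ≤ (1 + 2 / b) * (b / 2 * ‖u‖ ^ 2 + 1) := by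
        have : (1 + 2 / b) * (b / 2 * ‖u‖ ^ 2 + 1) = 1 + ‖u‖ ^ 2 + 2 / b + b / 2 * ‖u‖ ^ 2 := by
          field_simp; ring
        rw [this]
        have : 0 ≤ 2 / b + b / 2 * ‖u‖ ^ 2 := by positivity
        linarith
    _ ≤ _ := by gcongr

lemma GD_Kg {c b : ℝ} (hc : 0 ≤ c) (hb : 0 < b) : GD (Kg c b) := by
  refine GD_of_poly (continuous_Kg c b) hb (D := c) fun u => ?_
  rw [Real.norm_of_nonneg (by unfold Kg; positivity), Kg]
  have : 0 ≤ c * ‖u‖ ^ 2 * Real.exp (-b * ‖u‖ ^ 2) := by positivity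
  nlinarith

lemma norm_Kg1 {c b : ℝ} (hc : 0 ≤ c) (hb : 0 < b) (u : E3) :
    ‖Kg1 c b u‖ = 2 * b * c * ‖u‖ * Real.exp (-b * ‖u‖ ^ 2) := by
  rw [Kg1, norm_smul, norm_Bl_le, Kg, Real.norm_eq_abs, abs_mul, abs_mul (-2)]
  rw [abs_of_pos hb, abs_of_nonneg (by positivity : 0 ≤ c * Real.exp (-b * ‖u‖ ^ 2))]
  norm_num
  ring

lemma GD_Kg1 {c b : ℝ} (hc : 0 ≤ c) (hb : 0 < b) : GD (Kg1 c b) := by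
  refine GD_of_poly (continuous_Kg1 c b) hb (D := 2 * b * c) fun u => ?_
  rw [norm_Kg1 hc hb]
  gcongr
  nlinarith [sq_nonneg (‖u‖ - 1)]

set_option maxSynthPendingDepth 3 in
lemma GD_Kg2 {c b : ℝ} (hc : 0 ≤ c) (hb : 0 < b) : GD (Kg2 c b) := by
  refine GD_of_poly (continuous_Kg2 c b) hb (D := 2 * b * c + 4 * b ^ 2 * c) fun u => ?_
  have hK : |Kg c b u| = Kg c b u := abs_of_nonneg (by unfold Kg; positivity)
  calc ‖Kg2 c b u‖ ≤ ‖(-2 * b * Kg c b u) • Bl‖ + ‖((-2 * b) • Kg1 c b u).smulRight (Bl u)‖ :=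
        norm_add_le _ _
    _ ≤ 2 * b * Kg c b u * 1 + 2 * b * ‖Kg1 c b u‖ * ‖u‖ := by
        rw [ContinuousLinearMap.norm_smulRight_apply, norm_smul, norm_smul, norm_Bl_le]
        simp only [Real.norm_eq_abs, abs_mul, hK, abs_neg, abs_of_pos hb, abs_two]
        have : 0 ≤ Kg c b u := by unfold Kg; positivity
        gcongr
        exact norm_Bl_le_one
    _ = (2 * b * c + 4 * b ^ 2 * c * ‖u‖ ^ 2) * Real.exp (-b * ‖u‖ ^ 2) := by
        rw [norm_Kg1 hc hb, Kg]; ring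
    _ ≤ _ := by
        gcongr
        have : 0 ≤ 2 * b * c * ‖u‖ ^ 2 := by positivity
        have : 0 ≤ 4 * b ^ 2 * c := by positivity
        nlinarith

noncomputable def g0 (x : E3) (δ : ℝ) (z : E3) : ℝ := 1 / 2 * Real.log (‖z - x‖ ^ 2 + δ)
noncomputable def g1 (x e : E3) (δ : ℝ) (z : E3) : ℝ := inner ℝ (z - x) e / (‖z - x‖ ^ 2 + δ)
noncomputable def g2 (x e : E3) (δ : ℝ) (z : E3) : ℝ :=
  1 / (‖z - x‖ ^ 2 + δ) - 2 * inner ℝ (z - x) e ^ 2 / (‖z - x‖ ^ 2 + δ) ^ 2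

lemma g0_bound (x : E3) {δ : ℝ} (h0 : 0 ≤ δ) (h1 : δ ≤ 1) (z : E3) (hz : z ≠ x) :
    |g0 x δ z| ≤ 3 * wt x z := by
  have hr : 0 < ‖z - x‖ := norm_pos_iff.2 (sub_ne_zero.2 hz)
  unfold g0 wt
  set r := ‖z - x‖
  have hq : 0 < r ^ 2 + δ := by positivity
  have hi : 0 < (r ^ 2)⁻¹ := by positivity
  rw [abs_le]
  constructor
  · have h := Real.one_sub_inv_le_log_of_pos hq
    have : (r ^ 2 + δ)⁻¹ ≤ (r ^ 2)⁻¹ := by gcongr; linarith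
    linarith
  · have h : Real.log (r ^ 2 + δ) ≤ Real.log ((r + 1) ^ 2) :=
      Real.log_le_log hq (by nlinarith)
    rw [Real.log_pow] at h
    have := Real.log_le_sub_one_of_pos (by positivity : 0 < r + 1)
    push_cast at h
    linarith

lemma inner_abs_le (x e : E3) (he : ‖e‖ = 1) (z : E3) : |inner ℝ (z - x) e| ≤ ‖z - x‖ := by
  simpa [he] using abs_real_inner_le_norm (z - x) e

lemma g1_bound (x e : E3) (he : ‖e‖ = 1) {δ : ℝ} (h0 : 0 ≤ δ) (z : E3) (hz : z ≠ x) :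
    |g1 x e δ z| ≤ 3 * wt x z := by
  have hr : 0 < ‖z - x‖ := norm_pos_iff.2 (sub_ne_zero.2 hz)
  have hin := inner_abs_le x e he z
  unfold g1 wt
  set r := ‖z - x‖
  have hq : 0 < r ^ 2 + δ := by positivity
  have hi : 0 < (r ^ 2)⁻¹ := by positivity
  rw [abs_div, abs_of_pos hq, div_le_iff₀ hq]
  have hm : (r ^ 2)⁻¹ * r ^ 2 = 1 := by field_simp
  have h3 : r ≤ 3 * (r ^ 3 + 1) := by
    have : 0 < r ^ 3 := by positivity
    rcases le_total r 1 with h | h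
    · linarith
    · nlinarith
  have : 0 ≤ 3 * (r + (r ^ 2)⁻¹) * δ := by positivity
  calc _ ≤ r := hin
    _ ≤ 3 * (r ^ 3 + 1) := h3
    _ = 3 * (r ^ 3 + (r ^ 2)⁻¹ * r ^ 2) := by rw [hm]
    _ ≤ _ := by nlinarith

lemma g2_bound (x e : E3) (he : ‖e‖ = 1) {δ : ℝ} (h0 : 0 ≤ δ) (z : E3) (hz : z ≠ x) :
    |g2 x e δ z| ≤ 3 * wt x z := by
  have hr : 0 < ‖z - x‖ := norm_pos_iff.2 (sub_ne_zero.2 hz)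
  have hin := inner_abs_le x e he z
  unfold g2 wt
  set r := ‖z - x‖
  set s := inner ℝ (z - x) e
  have hq : 0 < r ^ 2 + δ := by positivity
  have hs : s ^ 2 ≤ r ^ 2 := by
    rw [← sq_abs s]; gcongr
  have h1 : 1 / (r ^ 2 + δ) ≤ (r ^ 2)⁻¹ := by rw [one_div]; gcongr; linarith
  have h1' : 0 < 1 / (r ^ 2 + δ) := by positivity
  have h2 : 2 * s ^ 2 / (r ^ 2 + δ) ^ 2 ≤ 2 * (1 / (r ^ 2 + δ)) := by
    rw [div_le_iff₀ (by positivity)]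
    have : 2 * (1 / (r ^ 2 + δ)) * (r ^ 2 + δ) ^ 2 = 2 * (r ^ 2 + δ) := by field_simp
    rw [this]; linarith
  have h3 : 0 ≤ 2 * s ^ 2 / (r ^ 2 + δ) ^ 2 := by positivity
  rw [abs_le]
  constructor <;> linarith

lemma adm_g0 (x : E3) {δ : ℝ} (h0 : 0 ≤ δ) (h1 : δ ≤ 1) : Adm x (g0 x δ) :=
  ⟨by unfold g0; fun_prop, 3, g0_bound x h0 h1⟩
lemma adm_g1 (x e : E3) (he : ‖e‖ = 1) {δ : ℝ} (h0 : 0 ≤ δ) : Adm x (g1 x e δ) :=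
  ⟨by unfold g1; fun_prop, 3, g1_bound x e he h0⟩
lemma adm_g2 (x e : E3) (he : ‖e‖ = 1) {δ : ℝ} (h0 : 0 ≤ δ) : Adm x (g2 x e δ) :=
  ⟨by unfold g2; fun_prop, 3, g2_bound x e he h0⟩

lemma line_q (x e z : E3) (δ : ℝ) :
    HasDerivAt (fun t : ℝ => ‖z + t • e - x‖ ^ 2 + δ) (2 * inner ℝ (z - x) e) 0 := by
  have h : HasDerivAt (fun t : ℝ => z + t • e - x) e 0 := by
    have := ((((hasDerivAt_id (0 : ℝ)).smul_const e).const_add z).sub_const x)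
    simpa using this
  simpa using h.norm_sq.add_const δ

lemma line_s (x e z : E3) (he : ‖e‖ = 1) :
    HasDerivAt (fun t : ℝ => inner ℝ (z + t • e - x) e) 1 0 := by
  have h : HasDerivAt (fun t : ℝ => z + t • e - x) e 0 := by
    have := ((((hasDerivAt_id (0 : ℝ)).smul_const e).const_add z).sub_const x)
    simpa using this
  have := h.inner ℝ (hasDerivAt_const (0 : ℝ) e)
  simpa [he] using this

lemma line_g0 (x e : E3) {δ : ℝ} (h0 : 0 < δ) (z : E3) :
    HasLineDerivAt ℝ (g0 x δ) (g1 x e δ z) z e := by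
  have hq : ‖z - x‖ ^ 2 + δ ≠ 0 := by positivity
  have := ((line_q x e z δ).log (by simpa using hq)).const_mul (1 / 2)
  unfold HasLineDerivAt g0
  refine HasDerivAt.congr_deriv this ?_
  simp [g1]
  ring

lemma line_g1 (x e : E3) (he : ‖e‖ = 1) {δ : ℝ} (h0 : 0 < δ) (z : E3) :
    HasLineDerivAt ℝ (g1 x e δ) (g2 x e δ z) z e := by
  have hq : ‖z - x‖ ^ 2 + δ ≠ 0 := by positivity
  have := (line_s x e z he).div (line_q x e z δ) (by simpa using hq)
  unfold HasLineDerivAt g1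
  refine HasDerivAt.congr_deriv this ?_
  simp [g2]
  field_simp

lemma ibp {x e y : E3} {g g' : E3 → ℝ} (hg : Adm x g) (hg' : Adm x g')
    (hd : ∀ z, HasLineDerivAt ℝ g (g' z) z e) {K : E3 → ℝ} {K' : E3 → E3 →L[ℝ] ℝ}
    (hK : GD K) (hK' : GD (fun u => K' u e)) (hKd : ∀ u, HasFDerivAt K (K' u) u) :
    ∫ z, g z * K' (y - z) e = ∫ z, g' z * K (y - z) := by
  have h := integral_bilinear_hasLineDerivAt_right_eq_neg_left_of_integrable
    (μ := (volume : Measure E3)) (f := g) (f' := g')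
    (g := fun z => K (y - z)) (g' := fun z => - K' (y - z) e) (v := e)
    (B := ContinuousLinearMap.mul ℝ ℝ) (hg'.integrable hK y)
    (by simpa using (hg.integrable hK' y).neg) (hg.integrable hK y)
    (fun z _ => hd z) (fun z _ => by
      have := (hKd (y - z)).comp z ((hasFDerivAt_id z).const_sub y)
      simpa [Function.comp_def] using this.hasLineDerivAt e)
  simp only [ContinuousLinearMap.mul_apply', mul_neg, integral_neg, neg_inj] at h
  exact h

lemma GD.clm {G : Type*} [NormedAddCommGroup G] [NormedSpace ℝ G] {K : E3 → E3 →L[ℝ] G}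
    (hK : GD K) (e : E3) : GD (fun u => K u e) := by
  obtain ⟨hc, a, ha, D, hD⟩ := hK
  refine ⟨by fun_prop, a, ha, D * ‖e‖, fun u => ((K u).le_opNorm e).trans ?_⟩
  calc _ ≤ D * Real.exp (-a * ‖u‖ ^ 2) * ‖e‖ := by gcongr; exact hD u
    _ = _ := by ring

lemma tendsto_conv {x y : E3} {g : ℝ → E3 → ℝ}
    (hm : ∀ δ, 0 ≤ δ → δ ≤ 1 → Measurable (g δ))
    (hb : ∀ δ, 0 ≤ δ → δ ≤ 1 → ∀ z, z ≠ x → |g δ z| ≤ 3 * wt x z)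
    (hlim : ∀ z, z ≠ x → ContinuousAt (fun δ => g δ z) 0) {K : E3 → ℝ} (hK : GD K) :
    Tendsto (fun δ => ∫ z, g δ z * K (y - z)) (𝓝[>] 0) (𝓝 (∫ z, g 0 z * K (y - z))) := by
  obtain ⟨hc, a, ha, D, hD⟩ := hK
  have hev : ∀ᶠ δ : ℝ in 𝓝[>] 0, 0 ≤ δ ∧ δ ≤ 1 := by
    filter_upwards [Ioc_mem_nhdsGT (zero_lt_one' ℝ)] with δ hδ using ⟨hδ.1.le, hδ.2⟩
  refine tendsto_integral_filter_of_dominated_convergence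
    (fun z => 3 * D * (Real.exp (-a * ‖y - z‖ ^ 2) * wt x z)) ?_ ?_ ?_ ?_
  · filter_upwards [hev] with δ hδ
    exact ((hm δ hδ.1 hδ.2).mul (hc.comp (by fun_prop)).measurable).aestronglyMeasurable
  · filter_upwards [hev] with δ hδ
    filter_upwards [ae_ne x] with z hz
    have := hb δ hδ.1 hδ.2 z hz
    rw [norm_mul, Real.norm_eq_abs]
    calc _ ≤ (3 * wt x z) * (D * Real.exp (-a * ‖y - z‖ ^ 2)) :=
          mul_le_mul this (hD _) (norm_nonneg _) ((abs_nonneg _).trans this)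
      _ = _ := by ring
  · exact (integrable_gauss_wt a ha x y).const_mul _
  · filter_upwards [ae_ne x] with z hz
    exact ((hlim z hz).tendsto.mono_left nhdsWithin_le_nhds).mul_const _

lemma key {c b : ℝ} (hc : 0 ≤ c) (hb : 0 < b) (x y e : E3) (he : ‖e‖ = 1) :
    ∫ z, g0 x 0 z * Kg2 c b (y - z) e e = ∫ z, g2 x e 0 z * Kg c b (y - z) := by
  have h2 : GD (fun u => Kg2 c b u e e) := ((GD_Kg2 hc hb).clm e).clm e
  have hq : ∀ z, z ≠ x → ‖z - x‖ ^ 2 + 0 ≠ 0 := fun z hz => by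
    have : 0 < ‖z - x‖ := norm_pos_iff.2 (sub_ne_zero.2 hz)
    positivity
  have t1 := tendsto_conv (x := x) (y := y) (g := g0 x) (fun δ h0 h1 => (adm_g0 x h0 h1).1)
    (fun δ h0 h1 => g0_bound x h0 h1) (fun z hz => by
      unfold g0
      have := hq z hz
      exact ContinuousAt.mul (by fun_prop) (ContinuousAt.log (by fun_prop) this)) h2
  have t2 := tendsto_conv (x := x) (y := y) (g := g2 x e) (fun δ h0 h1 => (adm_g2 x e he h0).1)
    (fun δ h0 h1 => g2_bound x e he h0) (fun z hz => by
      unfold g2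
      have := hq z hz
      exact ContinuousAt.sub (ContinuousAt.div (by fun_prop) (by fun_prop) this)
        (ContinuousAt.div (by fun_prop) (by fun_prop) (pow_ne_zero 2 this))) (GD_Kg hc hb)
  refine tendsto_nhds_unique t1 (t2.congr' ?_)
  filter_upwards [Ioc_mem_nhdsGT (zero_lt_one' ℝ)] with δ hδ
  have i1 := ibp (x := x) (e := e) (y := y) (adm_g1 x e he hδ.1.le) (adm_g2 x e he hδ.1.le)
    (line_g1 x e he hδ.1) (GD_Kg hc hb) ((GD_Kg1 hc hb).clm e) (hasFDerivAt_Kg c b)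
  have i2 := ibp (x := x) (e := e) (y := y) (adm_g0 x hδ.1.le hδ.2) (adm_g1 x e he hδ.1.le)
    (line_g0 x e hδ.1) (K := fun u => Kg1 c b u e) (K' := fun u => (Kg2 c b u).flip e)
    ((GD_Kg1 hc hb).clm e) (by simpa using h2)
    (fun u => by
      have := (hasFDerivAt_Kg1 c b u).clm_apply (hasFDerivAt_const e u)
      refine this.congr_fderiv ?_
      ext v; simp)
  simp only [ContinuousLinearMap.flip_apply] at i2
  rw [i2, i1]

theorem laplacian_commutes_mollification (ε : ℝ) (hε : 0 < ε)
    (x y : EuclideanSpace ℝ (Fin 3)) (hxy : y ≠ x) :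
    laplacian (fun w => ∫ z, heatKernel 3 ε (w - z) * Real.log ‖z - x‖) y =
      ∫ z, heatKernel 3 ε (y - z) * ‖z - x‖ ^ (-2 : ℝ) := by
  obtain ⟨c, b, hc, hb, hK⟩ : ∃ c b : ℝ, 0 ≤ c ∧ 0 < b ∧ ∀ u, heatKernel 3 ε u = Kg c b u := by
    refine ⟨(2 * Real.pi * ε) ^ (-((3 : ℕ) : ℝ) / 2), 1 / (2 * ε), by positivity, by positivity,
      fun u => ?_⟩
    unfold heatKernel Kg
    congr 2
    ring
  have hg : ∀ z, Real.log ‖z - x‖ = g0 x 0 z := fun z => by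
    unfold g0
    rw [add_zero, Real.log_pow]
    push_cast; ring
  have hA := adm_g0 x le_rfl zero_le_one
  have hF : (fun w => ∫ z, heatKernel 3 ε (w - z) * Real.log ‖z - x‖) =
      fun w => ∫ z, g0 x 0 z • Kg c b (w - z) := by
    funext w
    simp only [hK, hg, smul_eq_mul, mul_comm]
  have hd1 : fderiv ℝ (fun w => ∫ z, g0 x 0 z • Kg c b (w - z)) =
      fun w => ∫ z, g0 x 0 z • Kg1 c b (w - z) := by
    funext w
    exact (hasFDerivAt_conv hA (GD_Kg hc hb) (GD_Kg1 hc hb) (hasFDerivAt_Kg c b) w).fderiv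
  have hd2 := (hasFDerivAt_conv hA (GD_Kg1 hc hb) (GD_Kg2 hc hb) (hasFDerivAt_Kg1 c b) y).fderiv
  have hI := hA.integrable (GD_Kg2 hc hb) y
  have hterm : ∀ i : Fin 3, iteratedFDeriv ℝ 2 (fun w => ∫ z, g0 x 0 z • Kg c b (w - z)) y
      (fun _ => EuclideanSpace.single i (1 : ℝ)) =
      ∫ z, g2 x (EuclideanSpace.single i (1 : ℝ)) 0 z * Kg c b (y - z) := by
    intro i
    rw [iteratedFDeriv_two_apply, hd1, hd2, ContinuousLinearMap.integral_apply hI,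
      ContinuousLinearMap.integral_apply (hI.apply_continuousLinearMap _),
      ← key hc hb x y _ (by simp)]
    simp
  rw [laplacian, hF]
  simp only [hterm]
  have hInt : ∀ i ∈ (Finset.univ : Finset (Fin 3)),
      Integrable (fun z => g2 x (EuclideanSpace.single i (1 : ℝ)) 0 z * Kg c b (y - z)) :=
    fun i _ => (adm_g2 x (EuclideanSpace.single i (1 : ℝ)) (by simp) le_rfl).integrable
      (GD_Kg hc hb) y
  rw [← integral_finsetSum _ hInt]
  refine integral_congr_ae ?_
  filter_upwards [ae_ne x] with z hz
  have hr : 0 < ‖z - x‖ := norm_pos_iff.2 (sub_ne_zero.2 hz)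
  rw [← Finset.sum_mul, hK, mul_comm]
  congr 1
  have hs : ∑ i : Fin 3, inner ℝ (z - x) (EuclideanSpace.single i (1 : ℝ)) ^ 2 = ‖z - x‖ ^ 2 := by
    rw [EuclideanSpace.norm_sq_eq]
    refine Finset.sum_congr rfl fun i _ => ?_
    rw [EuclideanSpace.inner_single_right]
    simp
  have h2 : ‖z - x‖ ^ (-2 : ℝ) = (‖z - x‖ ^ 2)⁻¹ := by
    rw [Real.rpow_neg hr.le]; norm_num
  rw [h2]
  simp only [g2, add_zero, Finset.sum_sub_distrib, ← Finset.sum_div, ← Finset.mul_sum, hs]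
  simp
  field_simp
  norm_num
end

section
/- There exists a constant C > 0 such that for all y ≠ x in ℝ³ and all 0 < ε < 1, ∫ p_ε(y - z) | log|z - x| − log|y - x| | dz ≤ C |y - x|^{-1/2} ε^{1/4}, where p_ε is the 3-dimensional heat kernel. -/
open MeasureTheory Real Filter Topology

/-- One-sided logarithmic modulus bound. -/
lemma log_sub_aux {u v s : ℝ} (hu : 0 < u) (hv : 0 < v) (hs : u - v ≤ s) (hs0 : 0 ≤ s) :
    Real.log u - Real.log v ≤ 2 * √s * (√v)⁻¹ := by
  have h1 : Real.log u - Real.log v = 2 * Real.log (√u / √v) := by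
    rw [Real.log_div (by positivity) (by positivity), Real.log_sqrt hu.le, Real.log_sqrt hv.le]
    ring
  have h2 := Real.log_le_sub_one_of_pos (show 0 < √u / √v by positivity)
  have hv' : 0 < √v := by positivity
  have h3 : √u ≤ √s + √v := by
    rw [Real.sqrt_le_left (by positivity)]
    nlinarith [Real.sq_sqrt hs0, Real.sq_sqrt hv.le, Real.sqrt_nonneg s,
      mul_nonneg (Real.sqrt_nonneg s) hv'.le]
  have h4 : √u / √v ≤ (√s + √v) / √v := by gcongr
  have h5 : (√s + √v) / √v = √s * (√v)⁻¹ + 1 := by field_simp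
  rw [h1]
  linarith

lemma log_modulus {u v s : ℝ} (hu : 0 < u) (hv : 0 < v) (hs : |u - v| ≤ s) :
    |Real.log u - Real.log v| * √v ≤ 4 * √s + 2 * s * (√u)⁻¹ := by
  have hs0 : 0 ≤ s := (abs_nonneg _).trans hs
  have hA := log_sub_aux hu hv ((le_abs_self _).trans hs) hs0
  have hB := log_sub_aux hv hu (by rw [abs_sub_comm] at hs; exact (le_abs_self _).trans hs) hs0
  have hu' : 0 < √u := by positivity
  have hv' : 0 < √v := by positivity
  have p1 : 0 ≤ 2 * √s * (√v)⁻¹ := by positivity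
  have p2 : 0 ≤ 2 * √s * (√u)⁻¹ := by positivity
  have h : |Real.log u - Real.log v| ≤ 2 * √s * (√v)⁻¹ + 2 * √s * (√u)⁻¹ := by
    rw [abs_le]; constructor <;> linarith
  have h3 : √v ≤ √s + √u := by
    rw [Real.sqrt_le_left (by positivity)]
    nlinarith [Real.sq_sqrt hs0, Real.sq_sqrt hu.le, Real.sqrt_nonneg s,
      mul_nonneg (Real.sqrt_nonneg s) hu'.le, (abs_le.1 hs).1]
  calc _ ≤ (2 * √s * (√v)⁻¹ + 2 * √s * (√u)⁻¹) * √v := by gcongr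
    _ = 2 * √s + 2 * √s * (√u)⁻¹ * √v := by field_simp
    _ ≤ 2 * √s + 2 * √s * (√u)⁻¹ * (√s + √u) := by gcongr
    _ = 4 * √s + 2 * (√s * √s) * (√u)⁻¹ := by field_simp; ring
    _ = _ := by rw [Real.mul_self_sqrt hs0]

/-- truncated singular kernel -/
noncomputable def singK (z : EuclideanSpace ℝ (Fin 3)) : ℝ :=
  (Metric.ball (0 : EuclideanSpace ℝ (Fin 3)) 1).indicator (fun z => (√‖z‖)⁻¹) z

lemma singK_nonneg (z : EuclideanSpace ℝ (Fin 3)) : 0 ≤ singK z :=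
  Set.indicator_nonneg (fun _ _ => by positivity) z

lemma singK_integrable : Integrable singK := by
  unfold singK
  rw [integrable_indicator_iff measurableSet_ball]
  refine integrableOn_ball_of_norm_le_rpow (C := 1) (α := 1 / 2) ?_ ?_ ?_ ?_
  · simp
  · rw [finrank_euclideanSpace_fin]; norm_num
  · refine Eventually.of_forall fun x => ?_
    rw [Real.norm_of_nonneg (by positivity), Real.rpow_neg (norm_nonneg _), Real.sqrt_eq_rpow,
      one_mul]
  · exact Measurable.aestronglyMeasurable (by fun_prop)

lemma inv_sqrt_le_singK (z : EuclideanSpace ℝ (Fin 3)) : (√‖z‖)⁻¹ ≤ 1 + singK z := by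
  by_cases h : ‖z‖ < 1
  · have : singK z = (√‖z‖)⁻¹ := Set.indicator_of_mem (by simpa using h) _
    linarith
  · have : 1 ≤ √‖z‖ := by rw [Real.one_le_sqrt]; linarith
    have := inv_le_one_of_one_le₀ this
    linarith [singK_nonneg z]

lemma gauss_integrable :
    Integrable (fun w : EuclideanSpace ℝ (Fin 3) => Real.exp (-(1 / 4) * ‖w‖ ^ 2)) := by
  have := (GaussianFourier.integrable_cexp_neg_mul_sq_norm_add
    (V := EuclideanSpace ℝ (Fin 3)) (b := ((1 / 4 : ℝ) : ℂ)) (by simp) 0 0).norm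
  refine this.congr (Eventually.of_forall fun w => ?_)
  simp [Complex.norm_exp, ← Complex.ofReal_pow]

lemma heat_one_le (w : EuclideanSpace ℝ (Fin 3)) :
    heatKernel 3 1 w ≤ Real.exp (-(1 / 4) * ‖w‖ ^ 2) * Real.exp (-(1 / 4) * ‖w‖ ^ 2) := by
  unfold heatKernel
  have h1 : (2 * Real.pi * 1) ^ (-((3 : ℕ) : ℝ) / 2) ≤ 1 := by
    apply Real.rpow_le_one_of_one_le_of_nonpos
    · linarith [Real.pi_gt_three]
    · norm_num
  rw [← Real.exp_add]
  calc _ ≤ 1 * Real.exp (-‖w‖ ^ 2 / (2 * 1)) := by gcongr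
    _ = _ := by rw [one_mul]; congr 1; ring

lemma heat_nonneg {t : ℝ} (ht : 0 < t) (w : EuclideanSpace ℝ (Fin 3)) :
    0 ≤ heatKernel 3 t w := by
  unfold heatKernel; positivity

lemma mul_exp_le (s : ℝ) : s * Real.exp (-(1 / 4) * s ^ 2) ≤ 1 := by
  have h := Real.add_one_le_exp (1 / 4 * s ^ 2)
  have h2 : s ≤ Real.exp (1 / 4 * s ^ 2) := by nlinarith [sq_nonneg (s - 2)]
  calc _ ≤ Real.exp (1 / 4 * s ^ 2) * Real.exp (-(1 / 4) * s ^ 2) := by gcongr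
    _ = 1 := by rw [← Real.exp_add]; ring_nf; simp

/-- the dominating function bound -/
lemma pointwise_bound (w b : EuclideanSpace ℝ (Fin 3)) (hb : b ≠ 0) (hw : w + b ≠ 0) :
    heatKernel 3 1 w * |Real.log ‖w + b‖ - Real.log ‖b‖| * √‖b‖ ≤
      10 * Real.exp (-(1 / 4) * ‖w‖ ^ 2) + 2 * singK (w + b) := by
  have hs : |‖w + b‖ - ‖b‖| ≤ ‖w‖ := by
    simpa using abs_norm_sub_norm_le (w + b) b
  have h1 := log_modulus (norm_pos_iff.2 hw) (norm_pos_iff.2 hb) hs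
  have h2 := inv_sqrt_le_singK (w + b)
  have hK := singK_nonneg (w + b)
  have h3 := heat_one_le w
  have hp := heat_nonneg one_pos w
  have hs0 := norm_nonneg w
  have h4 := mul_exp_le ‖w‖
  set s := ‖w‖
  set e := Real.exp (-(1 / 4) * s ^ 2)
  have he0 : 0 ≤ e := by positivity
  have he1 : e ≤ 1 := Real.exp_le_one_iff.2 (by nlinarith [sq_nonneg s])
  have hsq : √s ≤ 1 + s := by
    rw [Real.sqrt_le_left (by positivity)]; nlinarith
  set K := singK (w + b)
  calc _ = heatKernel 3 1 w * (|Real.log ‖w + b‖ - Real.log ‖b‖| * √‖b‖) := by ring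
    _ ≤ (e * e) * (4 * (1 + s) + 2 * s * (1 + K)) := by
        apply mul_le_mul h3 _ (by positivity) (by positivity)
        refine h1.trans ?_
        gcongr
    _ = e * (4 * e + 6 * (s * e)) + 2 * ((s * e) * e) * K := by ring
    _ ≤ e * (4 * 1 + 6 * 1) + 2 * (1 * 1) * K := by gcongr
    _ = _ := by ring

lemma unit_bound : ∃ C > 0, ∀ b : EuclideanSpace ℝ (Fin 3), b ≠ 0 →
    (∫ w, heatKernel 3 1 w * |Real.log ‖w + b‖ - Real.log ‖b‖|) * √‖b‖ ≤ C := by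
  refine ⟨10 * (∫ w : EuclideanSpace ℝ (Fin 3), Real.exp (-(1 / 4) * ‖w‖ ^ 2))
    + 2 * (∫ w, singK w) + 1, ?_, ?_⟩
  · have h1 : 0 ≤ ∫ w : EuclideanSpace ℝ (Fin 3), Real.exp (-(1 / 4) * ‖w‖ ^ 2) :=
      integral_nonneg fun _ => by positivity
    have h2 : 0 ≤ ∫ w, singK w := integral_nonneg singK_nonneg
    linarith
  · intro b hb
    rw [← integral_mul_const]
    have hK : Integrable (fun w => singK (w + b)) := singK_integrable.comp_add_right b
    have hG := gauss_integrable.const_mul 10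
    have hae : ∀ᵐ w : EuclideanSpace ℝ (Fin 3), w ≠ -b := by
      rw [ae_iff]; simp
    have := integral_mono_of_nonneg (μ := volume)
      (f := fun w => heatKernel 3 1 w * |Real.log ‖w + b‖ - Real.log ‖b‖| * √‖b‖)
      (g := fun w => 10 * Real.exp (-(1 / 4) * ‖w‖ ^ 2) + 2 * singK (w + b))
      (Eventually.of_forall fun w => by
        have := heat_nonneg one_pos w
        simp only [Pi.zero_apply]; positivity)
      (hG.add (hK.const_mul 2))
      (hae.mono fun w hw => pointwise_bound w b hb (fun h => hw (eq_neg_of_add_eq_zero_left h)))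
    rw [integral_add hG (hK.const_mul 2), integral_const_mul, integral_const_mul,
      integral_add_right_eq_self singK b] at this
    linarith

lemma heat_scale {ε : ℝ} (hε : 0 < ε) (w : EuclideanSpace ℝ (Fin 3)) :
    heatKernel 3 ε (√ε • w) * √ε ^ 3 = heatKernel 3 1 w := by
  unfold heatKernel
  have h1 : -‖√ε • w‖ ^ 2 / (2 * ε) = -‖w‖ ^ 2 / (2 * 1) := by
    rw [norm_smul, mul_pow, Real.norm_of_nonneg (Real.sqrt_nonneg _), Real.sq_sqrt hε.le]
    field_simp
  have h2 : (2 * Real.pi * ε) ^ (-((3 : ℕ) : ℝ) / 2) * √ε ^ 3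
      = (2 * Real.pi * 1) ^ (-((3 : ℕ) : ℝ) / 2) := by
    rw [Real.mul_rpow (by positivity) hε.le, Real.sqrt_eq_rpow, ← Real.rpow_natCast,
      ← Real.rpow_mul hε.le, mul_assoc, ← Real.rpow_add hε]
    norm_num
  rw [h1, ← h2]
  ring

lemma integral_scale (x y : EuclideanSpace ℝ (Fin 3)) (hxy : y ≠ x) {ε : ℝ} (hε : 0 < ε) :
    (∫ z, heatKernel 3 ε (y - z) * |Real.log ‖z - x‖ - Real.log ‖y - x‖|) =
      ∫ w, heatKernel 3 1 w *
        |Real.log ‖w + (√ε)⁻¹ • (y - x)‖ - Real.log ‖(√ε)⁻¹ • (y - x)‖| := by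
  have hr : 0 < √ε := by positivity
  rw [← integral_add_left_eq_self _ y]
  have h := Measure.integral_comp_smul_of_nonneg (volume : Measure (EuclideanSpace ℝ (Fin 3)))
    (fun z => heatKernel 3 ε (y - (y + z)) *
      |Real.log ‖y + z - x‖ - Real.log ‖y - x‖|) (√ε) (hR := hr.le)
  rw [eq_inv_smul_iff₀ (by positivity)] at h
  rw [← h, smul_eq_mul, ← integral_const_mul]
  have hae : ∀ᵐ w : EuclideanSpace ℝ (Fin 3), w ≠ -((√ε)⁻¹ • (y - x)) := by
    rw [ae_iff]; simp
  refine integral_congr_ae (hae.mono fun w hw => ?_)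
  have hw' : w + (√ε)⁻¹ • (y - x) ≠ 0 := fun h => hw (eq_neg_of_add_eq_zero_left h)
  have e0 : heatKernel 3 ε (y - (y + √ε • w)) = heatKernel 3 ε (√ε • w) := by
    unfold heatKernel
    rw [show y - (y + √ε • w) = -(√ε • w) by abel, norm_neg]
  have e1 : y + √ε • w - x = √ε • (w + (√ε)⁻¹ • (y - x)) := by
    rw [smul_add, smul_inv_smul₀ hr.ne']; abel
  have e2 : y - x = √ε • ((√ε)⁻¹ • (y - x)) := by
    rw [smul_inv_smul₀ hr.ne']
  have hb : (√ε)⁻¹ • (y - x) ≠ 0 := smul_ne_zero (by positivity) (sub_ne_zero.2 hxy)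
  have e3 : Real.log ‖y + √ε • w - x‖ - Real.log ‖y - x‖ =
      Real.log ‖w + (√ε)⁻¹ • (y - x)‖ - Real.log ‖(√ε)⁻¹ • (y - x)‖ := by
    have f1 : Real.log ‖y + √ε • w - x‖ =
        Real.log √ε + Real.log ‖w + (√ε)⁻¹ • (y - x)‖ := by
      rw [e1, norm_smul, Real.norm_of_nonneg hr.le, Real.log_mul hr.ne' (norm_ne_zero_iff.2 hw')]
    have f2 : Real.log ‖y - x‖ = Real.log √ε + Real.log ‖(√ε)⁻¹ • (y - x)‖ := by
      rw [← Real.log_mul hr.ne' (norm_ne_zero_iff.2 hb), ← Real.norm_of_nonneg hr.le,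
        ← norm_smul, Real.norm_of_nonneg hr.le, ← e2]
    rw [f1, f2]; ring
  simp only []
  rw [e0, e3, ← heat_scale hε w, finrank_euclideanSpace_fin]
  ring

theorem mollified_log_modulus :
    ∃ C > 0, ∀ x y : EuclideanSpace ℝ (Fin 3), y ≠ x → ∀ ε : ℝ, 0 < ε → ε < 1 →
      (∫ z, heatKernel 3 ε (y - z) * |Real.log ‖z - x‖ - Real.log ‖y - x‖|) ≤
        C * ‖y - x‖ ^ (-(1 : ℝ) / 2) * ε ^ ((1 : ℝ) / 4) := by
  obtain ⟨C, hC, h⟩ := unit_bound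
  refine ⟨C, hC, fun x y hxy ε hε _ => ?_⟩
  rw [integral_scale x y hxy hε]
  have hr : 0 < √ε := by positivity
  have hb : (√ε)⁻¹ • (y - x) ≠ 0 := smul_ne_zero (by positivity) (sub_ne_zero.2 hxy)
  have hn : 0 < ‖y - x‖ := norm_pos_iff.2 (sub_ne_zero.2 hxy)
  have h1 := h _ hb
  have hb' : 0 < √‖(√ε)⁻¹ • (y - x)‖ := Real.sqrt_pos.2 (norm_pos_iff.2 hb)
  rw [← le_div_iff₀ hb'] at h1
  refine h1.trans (le_of_eq ?_)
  rw [norm_smul, Real.norm_of_nonneg (by positivity), Real.sqrt_mul (by positivity),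
    Real.sqrt_inv, neg_div, Real.rpow_neg hn.le, ← Real.sqrt_eq_rpow]
  have : ε ^ ((1 : ℝ) / 4) = √√ε := by
    rw [Real.sqrt_eq_rpow, Real.sqrt_eq_rpow, ← Real.rpow_mul hε.le]; norm_num
  rw [this]
  field_simp
end
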